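/- Let k ∈ ℕ₀, m ∈ ℤ, M ∈ ℕ and n ∈ ℕ₀. Then 𝒞_k · H_{2k+1,m,M}(n) = c_{k,m,M}(4n) − Σ_{j=1}^{k} d_{k,j} Σ_{ℓ=1}^{j} (−1)^{j+ℓ} binom(j, ℓ) (4n)^ℓ H_{2k−2ℓ+1,m,M}(n), where d_{k,j} := (−1)^j binom(k+1/2, j) binom(k+1/2, k−j) and 𝒞_k := Σ_{j=0}^{k} (−1)^j d_{k,j}; moreover 𝒞_k > 0. -/

import Mathlib

open scoped BigOperators

namespace HurwitzAP

/-- Positive definite integral binary quadratic forms `a x² + b x y + c y²`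
of discriminant `b² - 4 a c = -n`, encoded as triples `(a, b, c)`. -/
def QF (n : ℤ) : Type :=
  {f : ℤ × ℤ × ℤ // 0 < f.1 ∧ f.2.1 ^ 2 - 4 * f.1 * f.2.2 = -n}

/-- The right action of `SL₂(ℤ)` on binary quadratic forms by linear substitution of
variables. -/
def act (γ : Matrix.SpecialLinearGroup (Fin 2) ℤ) (f : ℤ × ℤ × ℤ) : ℤ × ℤ × ℤ :=
  (f.1 * (γ.1 0 0) ^ 2 + f.2.1 * (γ.1 0 0) * (γ.1 1 0) + f.2.2 * (γ.1 1 0) ^ 2,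
   2 * f.1 * (γ.1 0 0) * (γ.1 0 1) + f.2.1 * ((γ.1 0 0) * (γ.1 1 1) + (γ.1 0 1) * (γ.1 1 0))
     + 2 * f.2.2 * (γ.1 1 0) * (γ.1 1 1),
   f.1 * (γ.1 0 1) ^ 2 + f.2.1 * (γ.1 0 1) * (γ.1 1 1) + f.2.2 * (γ.1 1 1) ^ 2)

/-- `SL₂(ℤ)`-equivalence of binary quadratic forms of discriminant `-n`. -/
def qfRel (n : ℤ) (f g : QF n) : Prop :=
  ∃ γ : Matrix.SpecialLinearGroup (Fin 2) ℤ, g.1 = act γ f.1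

open Classical in
/-- The weight with which an `SL₂(ℤ)`-class of forms is counted: `1/2` for classes containing
a form `a(x² + y²)`, `1/3` for classes containing a form `a(x² + xy + y²)`, and `1` otherwise. -/
noncomputable def weight (n : ℤ) (c : Quot (qfRel n)) : ℝ :=
  if ∃ f : QF n, Quot.mk _ f = c ∧ f.1.2.1 = 0 ∧ f.1.2.2 = f.1.1 then 1 / 2
  else if ∃ f : QF n, Quot.mk _ f = c ∧ f.1.2.1 = f.1.1 ∧ f.1.2.2 = f.1.1 then 1 / 3
  else 1

/-- The Hurwitz class number `H(n)`: the number of `SL₂(ℤ)`-classes of positive definite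
integral binary quadratic forms of discriminant `-n`, weighted as in `weight`;
`H(0) = -1/12` and `H(n) = 0` for `n < 0`. -/
noncomputable def H (n : ℤ) : ℝ :=
  if n = 0 then -1 / 12
  else if n < 0 then 0
  else ∑ᶠ c : Quot (qfRel n), weight n c

/-- `H_{ν,m,M}(n) = Σ_{t ≡ m (mod M)} H(4n - t²) tᵛ`. -/
noncomputable def Hs (ν : ℕ) (m : ℤ) (M : ℕ) (n : ℕ) : ℝ :=
  ∑ᶠ t : ℤ, if (M : ℤ) ∣ (t - m) then H (4 * (n : ℤ) - t ^ 2) * (t : ℝ) ^ ν else 0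

/-- The generalized binomial coefficient `binom(x, j) = x(x-1)⋯(x-j+1)/j!`. -/
noncomputable def genBinom (x : ℝ) (j : ℕ) : ℝ :=
  (∏ i ∈ Finset.range j, (x - i)) / (Nat.factorial j)

/-- `c_{k,m,M}(n)`, the `n`-th Fourier coefficient of the Rankin–Cohen bracket
`[𝓗, θ_{1,m,M}]_k`. -/
noncomputable def cRC (k : ℕ) (m : ℤ) (M : ℕ) (n : ℕ) : ℝ :=
  ∑ j ∈ Finset.range (k + 1),
    (-1 : ℝ) ^ j * genBinom ((k : ℝ) + 1 / 2) (k - j) * genBinom ((k : ℝ) + 1 / 2) j *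
      ∑ᶠ t : ℤ, if (M : ℤ) ∣ (t - m) then
        ((n : ℝ) - (t : ℝ) ^ 2) ^ j * (t : ℝ) ^ (2 * (k - j) + 1) * H ((n : ℤ) - t ^ 2)
      else 0


/-- The Rankin–Cohen bracket coefficients `d_{k,j} = (-1)^j binom(k+1/2, j) binom(k+1/2, k-j)`. -/
noncomputable def dRC (k j : ℕ) : ℝ :=
  (-1 : ℝ) ^ j * genBinom ((k : ℝ) + 1 / 2) j * genBinom ((k : ℝ) + 1 / 2) (k - j)

/-- `𝒞_k = Σ_{j=0}^{k} (-1)^j d_{k,j}`. -/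
noncomputable def CRC (k : ℕ) : ℝ :=
  ∑ j ∈ Finset.range (k + 1), (-1 : ℝ) ^ j * dRC k j

/-!
For `j ≤ k`, the binomial theorem turns `(N - t²)ʲ t^(2(k-j)+1)` into a combination of the odd
powers `t^(2(k-l)+1)`, `0 ≤ l ≤ j`. Summing against `H(N - t²)`, which vanishes for `t² > N`,
expresses the Rankin–Cohen coefficient through the odd moments. The terms `l = 0` all involve the
top moment, with total coefficient `𝒞_k`, and separating them gives the recursion. The sign in
`d_{k,j}` cancels that of the `l = 0` term, so `𝒞_k` is a sum of products of positive binomials.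
-/

lemma genBinom_pos {x : ℝ} {j : ℕ} (hj : (j : ℝ) < x + 1) : 0 < genBinom x j := by
  refine div_pos (Finset.prod_pos fun i hi => ?_) (mod_cast j.factorial_pos)
  have hij : (i : ℝ) + 1 ≤ j := mod_cast Finset.mem_range.mp hi
  linarith

lemma neg_one_pow_mul_dRC (k j : ℕ) :
    (-1 : ℝ) ^ j * dRC k j =
      genBinom ((k : ℝ) + 1 / 2) j * genBinom ((k : ℝ) + 1 / 2) (k - j) := by
  rw [dRC, ← mul_assoc, ← mul_assoc, ← mul_pow, neg_one_mul, neg_neg, one_pow, one_mul]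

lemma CRC_pos (k : ℕ) : 0 < CRC k := by
  have genBinom_half_pos {j : ℕ} (hj : j ≤ k) : 0 < genBinom ((k : ℝ) + 1 / 2) j := by
    have hj' : (j : ℝ) ≤ k := mod_cast hj
    exact genBinom_pos (by linarith)
  refine Finset.sum_pos (fun j hj => ?_) Finset.nonempty_range_add_one
  rw [neg_one_pow_mul_dRC]
  exact mul_pos (genBinom_half_pos (Finset.mem_range_succ_iff.mp hj))
    (genBinom_half_pos (k.sub_le j))

lemma sum_range_succ_eq_add_sum_Icc {A : Type*} [AddCommMonoid A] (f : ℕ → A) (n : ℕ) :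
    ∑ i ∈ Finset.range (n + 1), f i = f 0 + ∑ i ∈ Finset.Icc 1 n, f i := by
  rw [Finset.sum_range_eq_add_Ico f n.add_one_pos, Finset.Ico_add_one_right_eq_Icc]

lemma sub_pow_mul_pow_sub {R : Type*} [CommRing R] (x y : R) {j k : ℕ} (hjk : j ≤ k) :
    (x - y) ^ j * y ^ (k - j) =
      ∑ l ∈ Finset.range (j + 1), (-1) ^ (j + l) * (j.choose l : R) * x ^ l * y ^ (k - l) := by
  rw [sub_pow, Finset.sum_mul]
  refine Finset.sum_congr rfl fun l hl => ?_
  have hlj : l ≤ j := Finset.mem_range_succ_iff.mp hl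
  rw [show k - l = (j - l) + (k - j) by lia, pow_add]
  ring

lemma finsum_mul_sub_pow_mul_pow_sub {ι R : Type*} [CommRing R] {w : ι → R}
    (hw : w.HasFiniteSupport) (x : R) (y : ι → R) {j k : ℕ} (hjk : j ≤ k) :
    ∑ᶠ i, w i * ((x - y i) ^ j * y i ^ (k - j)) =
      ∑ l ∈ Finset.range (j + 1), (-1) ^ (j + l) * (j.choose l : R) * x ^ l *
        ∑ᶠ i, w i * y i ^ (k - l) := by
  have moment_hasFiniteSupport (l : ℕ) : (fun i => w i * y i ^ (k - l)).HasFiniteSupport :=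
    hw.mul_left _
  calc ∑ᶠ i, w i * ((x - y i) ^ j * y i ^ (k - j))
      = ∑ᶠ i, ∑ l ∈ Finset.range (j + 1),
          (-1) ^ (j + l) * (j.choose l : R) * x ^ l * (w i * y i ^ (k - l)) := by
        simp only [sub_pow_mul_pow_sub x _ hjk, Finset.mul_sum, mul_left_comm (w _)]
    _ = ∑ l ∈ Finset.range (j + 1),
          ∑ᶠ i, (-1) ^ (j + l) * (j.choose l : R) * x ^ l * (w i * y i ^ (k - l)) :=
        finsum_sum_comm _ _ fun l _ => (moment_hasFiniteSupport l).mul_right _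
    _ = _ := Finset.sum_congr rfl fun l _ => (mul_finsum' _ _ (moment_hasFiniteSupport l)).symm

section Moments

variable (m : ℤ) (M N : ℕ)

/-- The coefficient `H(N - t²)`, restricted to the residue class `t ≡ m (mod M)`, against which
powers of `t` are summed. -/
noncomputable def hurwitzCoeff (t : ℤ) : ℝ :=
  if (M : ℤ) ∣ t - m then H (N - t ^ 2) else 0

/-- The moment `Σ_{t ≡ m (mod M)} H(N - t²) tᵛ`. Unlike in `Hs`, the index `N` need not be a
multiple of `4`. -/
noncomputable def hurwitzMoment (ν : ℕ) : ℝ :=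
  ∑ᶠ t : ℤ, hurwitzCoeff m M N t * (t : ℝ) ^ ν

lemma H_of_neg {n : ℤ} (hn : n < 0) : H n = 0 := by
  rw [H, if_neg hn.ne, if_pos hn]

lemma hurwitzCoeff_hasFiniteSupport : (hurwitzCoeff m M N).HasFiniteSupport := by
  refine (Set.finite_Icc (-(N : ℤ)) N).subset fun t ht => abs_le.mp ?_
  by_contra! hNt
  have abs_le_sq : |t| ≤ t ^ 2 := (Int.le_self_sq |t|).trans_eq (sq_abs t)
  have index_neg : (N : ℤ) - t ^ 2 < 0 := sub_neg.mpr (hNt.trans_le abs_le_sq)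
  exact ht (by rw [hurwitzCoeff, H_of_neg index_neg, ite_self])

lemma Hs_eq_hurwitzMoment (ν n : ℕ) : Hs ν m M n = hurwitzMoment m M (4 * n) ν := by
  simp only [Hs, hurwitzMoment, hurwitzCoeff, ite_mul, zero_mul, Nat.cast_mul, Nat.cast_ofNat]

lemma hurwitzMoment_two_mul_add_one (e : ℕ) :
    hurwitzMoment m M N (2 * e + 1) =
      ∑ᶠ t : ℤ, hurwitzCoeff m M N t * (t : ℝ) * ((t : ℝ) ^ 2) ^ e := by
  simp only [hurwitzMoment, pow_succ' _ (2 * e), pow_mul, mul_assoc]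

lemma cRC_eq_sum_dRC_mul_finsum (k : ℕ) :
    cRC k m M N = ∑ j ∈ Finset.range (k + 1), dRC k j *
      ∑ᶠ t : ℤ, hurwitzCoeff m M N t * (t : ℝ) *
        (((N : ℝ) - (t : ℝ) ^ 2) ^ j * ((t : ℝ) ^ 2) ^ (k - j)) := by
  refine Finset.sum_congr rfl fun j _ => ?_
  rw [dRC, mul_right_comm _ (genBinom _ (k - j))]
  refine congrArg _ (finsum_congr fun t => ?_)
  rw [hurwitzCoeff]
  split_ifs <;> ring

lemma cRC_eq_sum_dRC_mul_hurwitzMoment (k : ℕ) :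
    cRC k m M N = ∑ j ∈ Finset.range (k + 1), dRC k j *
      ∑ l ∈ Finset.range (j + 1), (-1 : ℝ) ^ (j + l) * (j.choose l : ℝ) * (N : ℝ) ^ l *
        hurwitzMoment m M N (2 * (k - l) + 1) := by
  rw [cRC_eq_sum_dRC_mul_finsum]
  refine Finset.sum_congr rfl fun j hj => ?_
  simp only [hurwitzMoment_two_mul_add_one]
  exact congrArg _ (finsum_mul_sub_pow_mul_pow_sub
    ((hurwitzCoeff_hasFiniteSupport m M N).mul_left _) _ _ (Finset.mem_range_succ_iff.mp hj))

theorem hurwitz_moment_recursion_general (k : ℕ) :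
    CRC k * hurwitzMoment m M N (2 * k + 1) =
      cRC k m M N -
        ∑ j ∈ Finset.Icc 1 k, dRC k j *
          ∑ l ∈ Finset.Icc 1 j, (-1 : ℝ) ^ (j + l) * (j.choose l : ℝ) * (N : ℝ) ^ l *
            hurwitzMoment m M N (2 * (k - l) + 1)
    ∧ 0 < CRC k := by
  refine ⟨eq_sub_of_add_eq ?_, CRC_pos k⟩
  set top := hurwitzMoment m M N (2 * k + 1) with top_def
  set summand : ℕ → ℕ → ℝ := fun j l =>
    (-1 : ℝ) ^ (j + l) * (j.choose l : ℝ) * (N : ℝ) ^ l * hurwitzMoment m M N (2 * (k - l) + 1)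
  have summand_zero (j : ℕ) : summand j 0 = (-1) ^ j * top := by simp [summand, top_def]
  calc CRC k * top + ∑ j ∈ Finset.Icc 1 k, dRC k j * ∑ l ∈ Finset.Icc 1 j, summand j l
      = CRC k * top +
          ∑ j ∈ Finset.range (k + 1), dRC k j * ∑ l ∈ Finset.Icc 1 j, summand j l := by
        simp [sum_range_succ_eq_add_sum_Icc]
    _ = ∑ j ∈ Finset.range (k + 1),
          dRC k j * (summand j 0 + ∑ l ∈ Finset.Icc 1 j, summand j l) := by
        rw [CRC, Finset.sum_mul, ← Finset.sum_add_distrib]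
        exact Finset.sum_congr rfl fun j _ => by rw [summand_zero]; ring
    _ = ∑ j ∈ Finset.range (k + 1), dRC k j * ∑ l ∈ Finset.range (j + 1), summand j l := by
        simp only [sum_range_succ_eq_add_sum_Icc]
    _ = cRC k m M N := (cRC_eq_sum_dRC_mul_hurwitzMoment m M N k).symm

end Moments

/-- **Recursion for odd Hurwitz moments** (Lemma 4.1): `𝒞_k H_{2k+1,m,M}(n) =
c_{k,m,M}(4n) - Σ_{j=1}^{k} d_{k,j} Σ_{ℓ=1}^{j} (-1)^{j+ℓ} binom(j,ℓ) (4n)^ℓ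
H_{2k-2ℓ+1,m,M}(n)`, and `𝒞_k > 0`. -/
theorem hurwitz_moment_recursion
    (k : ℕ) (m : ℤ) (M : ℕ) (hM : 0 < M) (n : ℕ) :
    CRC k * Hs (2 * k + 1) m M n =
      cRC k m M (4 * n) -
        ∑ j ∈ Finset.Icc 1 k, dRC k j *
          ∑ l ∈ Finset.Icc 1 j, (-1 : ℝ) ^ (j + l) * (Nat.choose j l : ℝ) *
            (4 * (n : ℝ)) ^ l * Hs (2 * (k - l) + 1) m M n
    ∧ 0 < CRC k := by
  simpa only [Hs_eq_hurwitzMoment, Nat.cast_mul, Nat.cast_ofNat] using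
    hurwitz_moment_recursion_general m M (4 * n) k

end HurwitzAP
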